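/- Let T and T* be finite trees, each with at least 3 vertices, let v be a vertex of T that is not a leaf, and let v* be a vertex of T* that is not a leaf. Then the set R = (L(T) × {v*}) ∪ ({v} × L(T*)) is a maximal general position set of T □ T*; that is, R is a general position set and no set properly containing R is a general position set of T □ T*. -/

import Mathlib

/-!
Distances in `G □ H` add coordinatewise, so a vertex lies between two others exactly when it does
so in both coordinates. A leaf lies between no two other vertices, which puts the cross of leaves
through `(v, w)` in general position. For maximality, extend a geodesic from `v` to `a` up to a
leaf `l`, and one from `w` to `b` up to a leaf `m`: then `(a, b)` lies between `(l, w)` and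
`(v, m)`. In a finite tree such an extension exists, because a vertex none of whose neighbours is
farther from `v` is a leaf.
-/

open SimpleGraph

/-- A set `S` of vertices of `G` is a general position set if for every three
pairwise-distinct vertices `x, y, z ∈ S` one has `d(x,y) ≠ d(x,z) + d(z,y)`. -/
def IsGenPosSet {V : Type*} (G : SimpleGraph V) (S : Set V) : Prop :=
  ∀ x ∈ S, ∀ y ∈ S, ∀ z ∈ S, x ≠ y → x ≠ z → y ≠ z →
    G.dist x y ≠ G.dist x z + G.dist z y

/-- The general position number of a graph on a finite vertex type: the
cardinality of a largest general position set. -/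
noncomputable def genPosNum {V : Type*} [Fintype V] (G : SimpleGraph V) : ℕ :=
  sSup {n | ∃ S : Finset V, IsGenPosSet G ↑S ∧ S.card = n}

/-- A vertex is a leaf if it has exactly one neighbour (degree 1). -/
def IsLeaf {V : Type*} (G : SimpleGraph V) (v : V) : Prop :=
  ∃! w, G.Adj v w

section Betweenness

variable {V W : Type*} {G : SimpleGraph V} {H : SimpleGraph W}

/-- The vertex `z` lies on a shortest path from `x` to `y`; a general position set is one in which
this holds for no three distinct vertices. Meant for connected graphs, since `SimpleGraph.dist` is
`0` between different components. -/
def IsBetween (G : SimpleGraph V) (x z y : V) : Prop :=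
  G.dist x y = G.dist x z + G.dist z y

theorem isBetween_self_right (x y : V) : IsBetween G x y y := by
  simp [IsBetween]

theorem IsBetween.symm {x y z : V} (h : IsBetween G x z y) : IsBetween G y z x := by
  rw [IsBetween, dist_comm, h, add_comm, dist_comm (u := z), dist_comm (u := x)]

theorem IsBetween.trans (hG : G.Connected) {v a l w : V}
    (hal : IsBetween G v a l) (hlw : IsBetween G v l w) : IsBetween G v a w := by
  refine le_antisymm hG.dist_triangle ?_
  calc G.dist v a + G.dist a w
      ≤ G.dist v a + (G.dist a l + G.dist l w) := by gcongr; exact hG.dist_triangle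
    _ = G.dist v l + G.dist l w := by rw [hal, add_assoc]
    _ = G.dist v w := Eq.symm hlw

theorem isBetween_of_adj_of_dist_lt {v l w : V} (hadj : G.Adj l w)
    (hlt : G.dist v l < G.dist v w) : IsBetween G v l w := by
  have hlw : G.dist l w = 1 := dist_eq_one_iff_adj.mpr hadj
  have htri := hadj.reachable.dist_triangle_right v
  unfold IsBetween
  omega

theorem dist_boxProd {x y : V × W} (hG : G.Reachable x.1 y.1) (hH : H.Reachable x.2 y.2) :
    (G □ H).dist x y = G.dist x.1 y.1 + H.dist x.2 y.2 := by
  have h := edist_boxProd (G := G) (H := H) x y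
  rw [← hG.coe_dist_eq_edist, ← hH.coe_dist_eq_edist,
    ← (reachable_boxProd.mpr ⟨hG, hH⟩).coe_dist_eq_edist] at h
  exact_mod_cast h

theorem isBetween_boxProd (hG : G.Connected) (hH : H.Connected) {x y z : V × W} :
    IsBetween (G □ H) x z y ↔ IsBetween G x.1 z.1 y.1 ∧ IsBetween H x.2 z.2 y.2 := by
  have htriG : G.dist x.1 y.1 ≤ G.dist x.1 z.1 + G.dist z.1 y.1 := hG.dist_triangle
  have htriH : H.dist x.2 y.2 ≤ H.dist x.2 z.2 + H.dist z.2 y.2 := hH.dist_triangle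
  simp only [IsBetween, dist_boxProd (hG _ _) (hH _ _)]
  omega

end Betweenness

section Leaves

variable {V : Type*} {G : SimpleGraph V}

theorem isBetween_of_forall_adj_eq (hG : G.Connected) {l w x : V} (hw : ∀ u, G.Adj l u → u = w)
    (hx : x ≠ l) : IsBetween G l w x := by
  obtain ⟨p, hp⟩ := hG.exists_walk_length_eq_dist l x
  cases p with
  | nil => exact absurd rfl hx
  | cons hadj q =>
    obtain rfl := hw _ hadj
    refine le_antisymm hG.dist_triangle ?_
    rw [← hp, Walk.length_cons, dist_eq_one_iff_adj.mpr hadj, add_comm]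
    gcongr
    exact dist_le q

theorem IsLeaf.eq_or_eq_of_isBetween (hG : G.Connected) {l x y : V} (hl : IsLeaf G l)
    (hxy : IsBetween G x l y) : x = l ∨ y = l := by
  by_contra! hne
  obtain ⟨w, hadj, hw⟩ := hl
  have hlw : G.dist l w = 1 := dist_eq_one_iff_adj.mpr hadj
  have hx : G.dist x l = G.dist x w + G.dist w l := (isBetween_of_forall_adj_eq hG hw hne.1).symm
  have hy : G.dist l y = G.dist l w + G.dist w y := isBetween_of_forall_adj_eq hG hw hne.2
  have htri : G.dist x y ≤ G.dist x w + G.dist w y := hG.dist_triangle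
  unfold IsBetween at hxy
  omega

/-- Every shortest path starting at `v` can be prolonged to a shortest path ending at a leaf. -/
def GeodesicsReachLeaves (G : SimpleGraph V) (v : V) : Prop :=
  ∀ a, ∃ l, IsLeaf G l ∧ IsBetween G v a l

theorem isLeaf_of_forall_adj_dist_le (hG : G.IsAcyclic) {v l : V} (hvl : G.Reachable v l)
    (hl : ∃ w, G.Adj l w) (hmax : ∀ w, G.Adj l w → G.dist v w ≤ G.dist v l) : IsLeaf G l := by
  obtain ⟨p, hp, hplen⟩ := hvl.exists_path_of_dist
  have eq_penultimate : ∀ u, G.Adj l u → u = p.penultimate := by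
    intro u hu
    obtain ⟨q, hq, hqlen⟩ := (hvl.trans hu.reachable).exists_path_of_dist
    have hlq : l ∉ q.support := by
      intro hmem
      have hlen := congrArg Walk.length (hG.path_concat hp hq hu hmem)
      rw [Walk.length_concat, hplen, hqlen] at hlen
      exact absurd (hmax u hu) (by omega)
    exact hG.eq_penultimate_of_adj_end hp hu
      (hG.mem_support_of_ne_mem_support_of_adj_of_isPath hp hq hu hlq)
  obtain ⟨w, hw⟩ := hl
  exact ⟨w, hw, fun u hu ↦ (eq_penultimate u hu).trans (eq_penultimate w hw).symm⟩

theorem geodesicsReachLeaves_of_isTree [Nontrivial V] (hG : G.IsTree) {v : V}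
    (hfin : (Set.range (G.dist v)).Finite) : GeodesicsReachLeaves G v := by
  intro a
  obtain ⟨l, hal, hmax⟩ := Set.Finite.exists_maximalFor' (G.dist v) {l | IsBetween G v a l}
    (hfin.subset (Set.image_subset_range _ _)) ⟨a, isBetween_self_right v a⟩
  refine ⟨l, isLeaf_of_forall_adj_dist_le hG.isAcyclic (hG.connected v l)
    (hG.connected.preconnected.exists_adj_of_nontrivial l) fun w hw ↦ ?_, hal⟩
  by_contra! hlt
  have haw : IsBetween G v a w :=
    IsBetween.trans hG.connected hal (isBetween_of_adj_of_dist_lt hw hlt)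
  exact hlt.not_ge (hmax haw hlt.le)

end Leaves

section LeavesCross

variable {V W : Type*} {G : SimpleGraph V} {H : SimpleGraph W} {v : V} {w : W}

/-- The set `(L(G) × {w}) ∪ ({v} × L(H))` of leaves of the two fibres of `G □ H` through `(v, w)`,
where `L` denotes the set of leaves. -/
def leavesCross (G : SimpleGraph V) (H : SimpleGraph W) (v : V) (w : W) : Set (V × W) :=
  ({x | IsLeaf G x} ×ˢ {w}) ∪ ({v} ×ˢ {y | IsLeaf H y})

theorem snd_eq_of_mem_leavesCross (hv : ¬ IsLeaf G v) {x : V × W}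
    (hx : x ∈ leavesCross G H v w) (hleaf : IsLeaf G x.1) : x.2 = w := by
  rcases hx with ⟨-, hxw⟩ | ⟨hxv, -⟩
  · exact hxw
  · exact absurd (hxv ▸ hleaf) hv

theorem fst_eq_of_mem_leavesCross (hw : ¬ IsLeaf H w) {x : V × W}
    (hx : x ∈ leavesCross G H v w) (hleaf : IsLeaf H x.2) : x.1 = v := by
  rcases hx with ⟨-, hxw⟩ | ⟨hxv, -⟩
  · exact absurd (hxw ▸ hleaf) hw
  · exact hxv

theorem isGenPosSet_leavesCross (hG : G.Connected) (hH : H.Connected)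
    (hv : ¬ IsLeaf G v) (hw : ¬ IsLeaf H w) : IsGenPosSet (G □ H) (leavesCross G H v w) := by
  intro x hx y hy z hz _ hxz hyz hdist
  obtain ⟨hbetw₁, hbetw₂⟩ := (isBetween_boxProd hG hH).mp hdist
  rcases hz with ⟨hz₁, hz₂⟩ | ⟨hz₁, hz₂⟩
  · have eq_z : ∀ u ∈ leavesCross G H v w, u.1 = z.1 → u = z := fun u hu h ↦
      Prod.ext h ((snd_eq_of_mem_leavesCross hv hu (h ▸ hz₁)).trans hz₂.symm)
    exact (hz₁.eq_or_eq_of_isBetween hG hbetw₁).elim (hxz ∘ eq_z x hx) (hyz ∘ eq_z y hy)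
  · have eq_z : ∀ u ∈ leavesCross G H v w, u.2 = z.2 → u = z := fun u hu h ↦
      Prod.ext ((fst_eq_of_mem_leavesCross hw hu (h ▸ hz₂)).trans hz₁.symm) h
    exact (hz₂.eq_or_eq_of_isBetween hH hbetw₂).elim (hxz ∘ eq_z x hx) (hyz ∘ eq_z y hy)

theorem exists_mem_leavesCross_isBetween (hG : G.Connected) (hH : H.Connected)
    (hv : ¬ IsLeaf G v) (hGv : GeodesicsReachLeaves G v) (hHw : GeodesicsReachLeaves H w)
    (p : V × W) :
    ∃ x ∈ leavesCross G H v w, ∃ y ∈ leavesCross G H v w, x ≠ y ∧ IsBetween (G □ H) x p y := by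
  obtain ⟨l, hl, hvl⟩ := hGv p.1
  obtain ⟨m, hm, hwm⟩ := hHw p.2
  have hlv : l ≠ v := by
    rintro rfl
    exact hv hl
  exact ⟨(l, w), Or.inl ⟨hl, rfl⟩, (v, m), Or.inr ⟨rfl, hm⟩, fun h ↦ hlv (congrArg Prod.fst h),
    (isBetween_boxProd hG hH).mpr ⟨hvl.symm, hwm⟩⟩

theorem maximal_genPos_leaves_cross_general (hG : G.Connected) (hH : H.Connected)
    (hv : ¬ IsLeaf G v) (hw : ¬ IsLeaf H w)
    (hGv : GeodesicsReachLeaves G v) (hHw : GeodesicsReachLeaves H w) :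
    Maximal (IsGenPosSet (G □ H)) (leavesCross G H v w) := by
  refine Set.maximal_iff_forall_ssuperset.mpr
    ⟨isGenPosSet_leavesCross hG hH hv hw, fun S hS hgen ↦ ?_⟩
  obtain ⟨hsub, p, hpS, hp⟩ := Set.ssubset_iff_exists.mp hS
  obtain ⟨x, hx, y, hy, hxy, hbetw⟩ := exists_mem_leavesCross_isBetween hG hH hv hGv hHw p
  exact hgen x (hsub hx) y (hsub hy) p hpS hxy (ne_of_mem_of_not_mem hx hp)
    (ne_of_mem_of_not_mem hy hp) hbetw

end LeavesCross

/-- For trees `T, T*` on at least 3 vertices, a non-leaf `v` of `T` and a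
non-leaf `v*` of `T*`, the set `(L(T) × {v*}) ∪ ({v} × L(T*))` is a maximal
general position set of `T □ T*`. -/
theorem maximal_genPos_leaves_cross {V W : Type*} [Fintype V] [Fintype W]
    (T : SimpleGraph V) (T' : SimpleGraph W)
    (hT : T.IsTree) (hT' : T'.IsTree)
    (hV : 3 ≤ Fintype.card V) (hW : 3 ≤ Fintype.card W)
    (v : V) (hv : ¬ IsLeaf T v) (v' : W) (hv' : ¬ IsLeaf T' v') :
    IsGenPosSet (T □ T')
      (({x : V | IsLeaf T x} ×ˢ {v'}) ∪ ({v} ×ˢ {y : W | IsLeaf T' y})) ∧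
    ∀ S : Set (V × W),
      (({x : V | IsLeaf T x} ×ˢ {v'}) ∪ ({v} ×ˢ {y : W | IsLeaf T' y})) ⊂ S →
      ¬ IsGenPosSet (T □ T') S := by
  have : Nontrivial V := Fintype.one_lt_card_iff_nontrivial.mp (by omega)
  have : Nontrivial W := Fintype.one_lt_card_iff_nontrivial.mp (by omega)
  exact Set.maximal_iff_forall_ssuperset.mp <|
    maximal_genPos_leaves_cross_general hT.connected hT'.connected hv hv'
      (geodesicsReachLeaves_of_isTree hT (Set.finite_range _))
      (geodesicsReachLeaves_of_isTree hT' (Set.finite_range _))
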